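/- arXiv:2402.04943 — 9 statements merged into one kernel-verified Lean document; each statement's English description precedes it below -/
import Mathlib

section
/- Let X = ![![1,1],![0,1]] and Y = ![![1,0],![1,1]] be 2×2 integer matrices. The map sending a list of bits l : List Bool to the product of the corresponding matrices (false ↦ X, true ↦ Y), taken in order, is injective. Equivalently, two different words in X and Y (as positive products) are never equal as matrices, i.e., X and Y generate a free semigroup. -/
open Matrix

def X : Matrix (Fin 2) (Fin 2) ℤ := !![1, 1; 0, 1]
def Y : Matrix (Fin 2) (Fin 2) ℤ := !![1, 0; 1, 1]

/-!
Both matrices are transvections and preserve the vectors whose two coordinates are positive. On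
these, `X` makes the first coordinate the larger one and `Y` the second, so the vector `w • (1, 1)`
reveals the first letter of the word `w`, with equal coordinates only for the empty word. Since `X`
and `Y` are invertible, that letter can be cancelled and the rest of the word is read off in the
same way.
-/

open Function Set

section PingPong

variable {M α ι : Type*} [Monoid M] [MulAction M α] {g : ι → M} {A : Set α} {p : α}

lemma list_prod_smul_mem (hA : ∀ i, MapsTo (g i • ·) A A) (hp : p ∈ A) (l : List ι) :
    (l.map g).prod • p ∈ A := by
  induction l with
  | nil => simpa using hp
  | cons i l ih => simpa [mul_smul] using hA i ih

theorem list_prod_smul_injective_of_ping_pong {U : ι → Set α} (hUA : ∀ i, U i ⊆ A)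
    (hU : Pairwise (Disjoint on U)) (hmaps : ∀ i, MapsTo (g i • ·) A (U i))
    (hinj : ∀ i, InjOn (g i • ·) A) (hp : p ∈ A) (hpU : ∀ i, p ∉ U i) :
    Injective fun l : List ι => (l.map g).prod • p := by
  have tail_mem := list_prod_smul_mem (fun i => (hmaps i).mono_right (hUA i)) hp
  have cons_mem (i : ι) (l : List ι) : ((i :: l).map g).prod • p ∈ U i := by
    simpa [mul_smul] using hmaps i (tail_mem l)
  intro l
  induction l with
  | nil =>
    rintro (_ | ⟨j, m⟩) h
    · rfl
    · have hj : p ∈ U j := mem_of_eq_of_mem ((one_smul M p).symm.trans h) (cons_mem j m)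
      exact absurd hj (hpU j)
  | cons i l ih =>
    rintro (_ | ⟨j, m⟩) h
    · have hi : p ∈ U i := mem_of_eq_of_mem ((one_smul M p).symm.trans h.symm) (cons_mem i l)
      exact absurd hi (hpU i)
    · obtain rfl : i = j := hU.eq <|
        not_disjoint_iff.mpr ⟨_, cons_mem i l, mem_of_eq_of_mem h (cons_mem j m)⟩
      have htail : g i • (l.map g).prod • p = g i • (m.map g).prod • p := by
        simpa [mul_smul] using h
      rw [ih (hinj i (tail_mem l) (tail_mem m) htail)]

end PingPong

section Transvection

variable {n R : Type*} [Fintype n] [DecidableEq n] [CommRing R] {i j : n}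

lemma transvection_smul_apply_same (i j : n) (c : R) (v : n → R) :
    (transvection i j c • v) i = v i + c * v j := by
  simp [transvection, add_mulVec, single_mulVec]

lemma transvection_smul_apply_of_ne {k : n} (hk : k ≠ i) (j : n) (c : R) (v : n → R) :
    (transvection i j c • v) k = v k := by
  simp [transvection, add_mulVec, single_mulVec, hk]

lemma transvection_smul_injective (hij : i ≠ j) (c : R) :
    Injective (transvection i j c • · : (n → R) → n → R) := by
  refine mulVec_injective_of_isUnit ((isUnit_iff_isUnit_det _).mpr ?_)
  simp [det_transvection_of_ne i j hij c]

end Transvection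

section Cones

variable {n : Type*}

/-- The vectors whose coordinates `i` and `j` are positive; for `n = {i, j}` this is the open
positive quadrant, on which the two transvections play ping-pong. -/
def positiveCone (R : Type*) [Zero R] [LT R] (i j : n) : Set (n → R) :=
  {v | 0 < v i ∧ 0 < v j}

/-- The vectors of `positiveCone R i j` whose coordinate `i` exceeds coordinate `j`. Positivity of
coordinate `i` is then automatic. These are the ping-pong sets. -/
def dominantCone (R : Type*) [Zero R] [LT R] (i j : n) : Set (n → R) :=
  {v | 0 < v j ∧ v j < v i}

variable {R : Type*}

lemma positiveCone_comm [Zero R] [LT R] (i j : n) : positiveCone R i j = positiveCone R j i :=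
  ext fun _ => and_comm

lemma dominantCone_subset_positiveCone [Zero R] [Preorder R] (i j : n) :
    dominantCone R i j ⊆ positiveCone R i j :=
  fun _ hv => ⟨hv.1.trans hv.2, hv.1⟩

lemma disjoint_dominantCone_swap [Zero R] [Preorder R] (i j : n) :
    Disjoint (dominantCone R i j) (dominantCone R j i) :=
  disjoint_left.mpr fun _ hv hv' => hv.2.asymm hv'.2

lemma one_notMem_dominantCone [Zero R] [One R] [Preorder R] (i j : n) :
    (1 : n → R) ∉ dominantCone R i j :=
  fun h => h.2.false

lemma one_mem_positiveCone [Zero R] [One R] [PartialOrder R] [ZeroLEOneClass R] [NeZero (1 : R)]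
    (i j : n) : (1 : n → R) ∈ positiveCone R i j :=
  ⟨zero_lt_one, zero_lt_one⟩

end Cones

section FreeTransvections

variable {n R : Type*} [Fintype n] [DecidableEq n] [CommRing R] [PartialOrder R] [IsOrderedRing R]
  {i j : n}

lemma mapsTo_transvection_smul_dominantCone (hij : i ≠ j) {c : R} (hc : 1 ≤ c) :
    MapsTo (transvection i j c • ·) (positiveCone R i j) (dominantCone R i j) := by
  rintro v ⟨hi, hj⟩
  simp only [dominantCone, mem_ofPred_eq, transvection_smul_apply_same,
    transvection_smul_apply_of_ne hij.symm]
  refine ⟨hj, ?_⟩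
  calc v j ≤ c * v j := le_mul_of_one_le_left hj.le hc
    _ < v i + c * v j := lt_add_of_pos_left _ hi

theorem transvection_list_prod_smul_one_injective [Nontrivial R] (hij : i ≠ j) {a b : R}
    (ha : 1 ≤ a) (hb : 1 ≤ b) :
    Injective fun l : List Bool =>
      (l.map fun t => if t then transvection j i b else transvection i j a).prod • (1 : n → R) := by
  apply list_prod_smul_injective_of_ping_pong (A := positiveCone R i j)
    (U := fun t => if t then dominantCone R j i else dominantCone R i j)
  case hUA =>
    rintro (_ | _)
    · exact dominantCone_subset_positiveCone i j
    · exact positiveCone_comm (R := R) i j ▸ dominantCone_subset_positiveCone j i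
  case hU =>
    rintro (_ | _) (_ | _) hne
    · exact absurd rfl hne
    · exact disjoint_dominantCone_swap i j
    · exact disjoint_dominantCone_swap j i
    · exact absurd rfl hne
  case hmaps =>
    rintro (_ | _)
    · exact mapsTo_transvection_smul_dominantCone hij ha
    · exact positiveCone_comm (R := R) i j ▸ mapsTo_transvection_smul_dominantCone hij.symm hb
  case hinj =>
    rintro (_ | _)
    · exact (transvection_smul_injective hij a).injOn
    · exact (transvection_smul_injective hij.symm b).injOn
  case hp => exact one_mem_positiveCone i j
  case hpU =>
    rintro (_ | _)
    · exact one_notMem_dominantCone i j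
    · exact one_notMem_dominantCone j i

theorem XY_free_semigroup_general [Nontrivial R] (hij : i ≠ j) {a b : R} (ha : 1 ≤ a)
    (hb : 1 ≤ b) :
    Injective fun l : List Bool =>
      (l.map fun t => if t then transvection j i b else transvection i j a).prod :=
  .of_comp (f := (· • (1 : n → R))) (transvection_list_prod_smul_one_injective hij ha hb)

end FreeTransvections

lemma X_eq_transvection : X = transvection 0 1 1 := by decide

lemma Y_eq_transvection : Y = transvection 1 0 1 := by decide

/-- The matrices `X` and `Y` generate a free semigroup: the map sending a list of
bits to the ordered product of the corresponding matrices (false ↦ X, true ↦ Y)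
is injective. -/
theorem XY_free_semigroup :
    Function.Injective (fun l : List Bool =>
      (l.map (fun b => if b then Y else X)).prod) := by
  rw [X_eq_transvection, Y_eq_transvection]
  exact XY_free_semigroup_general zero_ne_one le_rfl le_rfl
end

section
/- Let A = ![![1,2],![0,1]], B = ![![1,0],![2,1]], C = ![![2,1],![1,1]] be 2×2 integer matrices. The map sending a list l : List (Fin 3) to the product of the corresponding matrices (0 ↦ A, 1 ↦ B, 2 ↦ C), taken in order, is injective; i.e., the semigroup generated by A, B, C in SL₂(ℤ) is free of rank 3. -/
open Matrix

def A : Matrix (Fin 2) (Fin 2) ℤ := !![1, 2; 0, 1]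
def B : Matrix (Fin 2) (Fin 2) ℤ := !![1, 0; 2, 1]
def C : Matrix (Fin 2) (Fin 2) ℤ := !![2, 1; 1, 1]

/-!
Ping-pong on the open quadrant `x, y > 0`: the matrices `A`, `B`, `C` are injective and map it
into the pairwise disjoint cones `x > 2y`, `y > 2x` and `y < x < 2y`. The vector `1 = (1, 1)` lies
in none of them, so its image under a product of generators tells whether the product is empty and,
if not, which generator comes first; cancel that generator and repeat.
-/

theorem foldr_injective_of_pingPong {ι α : Type*} {f : ι → α → α} {s : Set α} {t : ι → Set α}
    {x : α} (hf : ∀ i, Set.MapsTo (f i) s (t i)) (hts : ∀ i, t i ⊆ s)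
    (hinj : ∀ i, Set.InjOn (f i) s) (hdisj : Pairwise (Function.onFun Disjoint t))
    (hx : x ∈ s) (hxt : ∀ i, x ∉ t i) :
    Function.Injective (List.foldr f x) := by
  have foldr_mem (l : List ι) : l.foldr f x ∈ s :=
    l.foldrRecOn f hx fun _ ha i _ => hts i (hf i ha)
  have foldr_cons_mem (i : ι) (l : List ι) : (i :: l).foldr f x ∈ t i := hf i (foldr_mem l)
  have foldr_cons_ne (i : ι) (l : List ι) : (i :: l).foldr f x ≠ x :=
    ne_of_mem_of_not_mem (foldr_cons_mem i l) (hxt i)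
  intro l
  induction l with
  | nil =>
    rintro (_ | ⟨j, m⟩) h
    · rfl
    · exact absurd h.symm (foldr_cons_ne j m)
  | cons i l ih =>
    rintro (_ | ⟨j, m⟩) h
    · exact absurd h (foldr_cons_ne i l)
    · obtain rfl : i = j :=
        hdisj.eq (Set.not_disjoint_iff.mpr ⟨_, foldr_cons_mem i l, h ▸ foldr_cons_mem j m⟩)
      rw [ih (hinj i (foldr_mem l) (foldr_mem m) h)]

theorem prod_map_mulVec {ι n R : Type*} [Fintype n] [DecidableEq n] [Semiring R]
    (g : ι → Matrix n n R) (l : List ι) (v : n → R) :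
    (l.map g).prod *ᵥ v = l.foldr (fun i w => g i *ᵥ w) v := by
  induction l with
  | nil => simp
  | cons i l ih => rw [List.map_cons, List.prod_cons, ← mulVec_mulVec, ih, List.foldr_cons]

/-- The open first quadrant of the integer plane, on which ping-pong is played. -/
def openQuadrant : Set (Fin 2 → ℤ) := {v | 0 < v 0 ∧ 0 < v 1}

/-- The cones of the open quadrant into which `A`, `B` and `C` map it, indexed like the letters
of a word. In the third cone `0 < v 1` is implied by the two inequalities. -/
def pingPongCone : Fin 3 → Set (Fin 2 → ℤ)
  | 0 => {v | 0 < v 1 ∧ 2 * v 1 < v 0}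
  | 1 => {v | 0 < v 0 ∧ 2 * v 0 < v 1}
  | 2 => {v | v 1 < v 0 ∧ v 0 < 2 * v 1}

theorem pingPongCone_subset_openQuadrant (i : Fin 3) : pingPongCone i ⊆ openQuadrant := by
  intro v hv
  fin_cases i <;> simp only [pingPongCone, openQuadrant, Set.mem_ofPred_eq] at hv ⊢ <;> omega

theorem pairwise_disjoint_pingPongCone : Pairwise (Function.onFun Disjoint pingPongCone) := by
  intro i j hij
  refine Set.disjoint_left.mpr fun v hi hj => ?_
  fin_cases i <;> fin_cases j <;> first
    | exact hij rfl
    | simp only [pingPongCone, Set.mem_ofPred_eq] at hi hj; omega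

theorem one_mem_openQuadrant : 1 ∈ openQuadrant := by
  simp [openQuadrant]

theorem one_notMem_pingPongCone (i : Fin 3) : 1 ∉ pingPongCone i := by
  fin_cases i <;> simp [pingPongCone]

theorem A_mulVec (v : Fin 2 → ℤ) : A *ᵥ v = ![v 0 + 2 * v 1, v 1] := by
  simp [A, mulVec_eq_sum, funext_iff, Fin.forall_fin_two, mul_comm]

theorem B_mulVec (v : Fin 2 → ℤ) : B *ᵥ v = ![v 0, 2 * v 0 + v 1] := by
  simp [B, mulVec_eq_sum, funext_iff, Fin.forall_fin_two, mul_comm]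

theorem C_mulVec (v : Fin 2 → ℤ) : C *ᵥ v = ![2 * v 0 + v 1, v 0 + v 1] := by
  simp [C, mulVec_eq_sum, funext_iff, Fin.forall_fin_two, mul_comm]

theorem mapsTo_mulVec_pingPongCone (i : Fin 3) :
    Set.MapsTo (![A, B, C] i *ᵥ ·) openQuadrant (pingPongCone i) := by
  rintro v ⟨hv₀, hv₁⟩
  fin_cases i
  · change A *ᵥ v ∈ pingPongCone 0
    rw [A_mulVec]
    exact ⟨hv₁, lt_add_of_pos_left _ hv₀⟩
  · change B *ᵥ v ∈ pingPongCone 1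
    rw [B_mulVec]
    exact ⟨hv₀, lt_add_of_pos_right _ hv₁⟩
  · change C *ᵥ v ∈ pingPongCone 2
    simp only [C_mulVec, pingPongCone, Set.mem_ofPred_eq, cons_val_zero, cons_val_one]
    omega

theorem det_generator (i : Fin 3) : (![A, B, C] i).det = 1 := by
  fin_cases i <;> simp [A, B, C, det_fin_two]

theorem mulVec_generator_injective (i : Fin 3) :
    Function.Injective (![A, B, C] i *ᵥ ·) :=
  mulVec_injective_of_isUnit <| (isUnit_iff_isUnit_det _).mpr <| by
    rw [det_generator]; exact isUnit_one

/-- Proposition 3.1: the semigroup generated by `A`, `B`, `C` is free of rank 3,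
i.e. the map sending a list of symbols to the ordered product of the
corresponding matrices (0 ↦ A, 1 ↦ B, 2 ↦ C) is injective. -/
theorem ABC_free_semigroup :
    Function.Injective (fun l : List (Fin 3) =>
      (l.map (![A, B, C])).prod) := by
  have orbit_injective : Function.Injective
      (List.foldr (fun i v => ![A, B, C] i *ᵥ v) (1 : Fin 2 → ℤ)) :=
    foldr_injective_of_pingPong mapsTo_mulVec_pingPongCone pingPongCone_subset_openQuadrant
      (fun i => (mulVec_generator_injective i).injOn) pairwise_disjoint_pingPongCone
      one_mem_openQuadrant one_notMem_pingPongCone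
  intro l m (h : (l.map ![A, B, C]).prod = (m.map ![A, B, C]).prod)
  apply orbit_injective
  rw [← prod_map_mulVec, ← prod_map_mulVec, h]
end

section
/- Let X = ![![1,1],![0,1]] and Y = ![![1,0],![1,1]]. For every list of m matrices each equal to X or Y, every entry of their product (a 2×2 integer matrix) is at most Nat.fib (m+1), the (m+1)-st Fibonacci number. -/
open Matrix

theorem X_mulVec_eq (v : Fin 2 → ℤ) : X *ᵥ v = ![v 0 + v 1, v 1] := by
  ext i
  fin_cases i <;> simp [X, vecHead, vecTail]

theorem Y_mulVec_eq (v : Fin 2 → ℤ) : Y *ᵥ v = ![v 0, v 0 + v 1] := by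
  ext i
  fin_cases i <;> simp [Y, vecHead, vecTail]

/-- The invariant at time `n` of a vector acted on repeatedly by `X` or `Y`. Each action replaces
one coordinate by the sum of the two, so the bound on the coordinates propagates only together with
the bound by the next Fibonacci number on their sum. -/
structure FibBounded (n : ℕ) (v : Fin 2 → ℤ) : Prop where
  apply_le : ∀ i, v i ≤ Nat.fib (n + 1)
  add_le : v 0 + v 1 ≤ Nat.fib (n + 2)

namespace FibBounded

variable {n : ℕ} {v : Fin 2 → ℤ}

theorem single_one (j : Fin 2) : FibBounded 0 (Pi.single j 1) where
  apply_le i := by fin_cases i <;> fin_cases j <;> simp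
  add_le := by fin_cases j <;> simp

theorem apply_le_fib_add_two (hv : FibBounded n v) (i : Fin 2) : v i ≤ Nat.fib (n + 2) :=
  (hv.apply_le i).trans (mod_cast Nat.fib_le_fib_succ)

theorem add_add_apply_le (hv : FibBounded n v) (i : Fin 2) :
    v 0 + v 1 + v i ≤ Nat.fib (n + 3) :=
  calc
    v 0 + v 1 + v i ≤ Nat.fib (n + 2) + Nat.fib (n + 1) := add_le_add hv.add_le (hv.apply_le i)
    _ = Nat.fib (n + 3) := by rw [add_comm]; exact_mod_cast (Nat.fib_add_two (n := n + 1)).symm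

theorem X_mulVec (hv : FibBounded n v) : FibBounded (n + 1) (X *ᵥ v) := by
  rw [X_mulVec_eq]
  exact ⟨Fin.forall_fin_two.2 ⟨hv.add_le, hv.apply_le_fib_add_two 1⟩, hv.add_add_apply_le 1⟩

theorem Y_mulVec (hv : FibBounded n v) : FibBounded (n + 1) (Y *ᵥ v) := by
  rw [Y_mulVec_eq]
  refine ⟨Fin.forall_fin_two.2 ⟨hv.apply_le_fib_add_two 0, hv.add_le⟩, ?_⟩
  simpa [add_comm] using hv.add_add_apply_le 0

theorem list_prod_mulVec (hv : FibBounded n v) (l : List (Matrix (Fin 2) (Fin 2) ℤ))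
    (h : ∀ M ∈ l, M = X ∨ M = Y) : FibBounded (n + l.length) (l.prod *ᵥ v) := by
  induction l with
  | nil => simpa using hv
  | cons M l ih =>
    obtain ⟨hM, hl⟩ := List.forall_mem_cons.1 h
    rw [List.prod_cons, ← mulVec_mulVec, List.length_cons, ← add_assoc]
    rcases hM with rfl | rfl
    · exact (ih hl).X_mulVec
    · exact (ih hl).Y_mulVec

end FibBounded

/-- Every entry of a product of `m` matrices from `{X, Y}` is at most the
`(m+1)`-st Fibonacci number. -/
theorem entry_le_fib (l : List (Matrix (Fin 2) (Fin 2) ℤ))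
    (h : ∀ M ∈ l, M = X ∨ M = Y) (i j : Fin 2) :
    l.prod i j ≤ (Nat.fib (l.length + 1) : ℤ) := by
  have column_le : (l.prod *ᵥ Pi.single j 1) i ≤ Nat.fib (0 + l.length + 1) :=
    ((FibBounded.single_one j).list_prod_mulVec l h).apply_le i
  rwa [mulVec_single_one, zero_add] at column_le
end

section
/- Let A = ![![1,2],![0,1]], B = ![![1,0],![2,1]], C = ![![2,1],![1,1]]. For every list of n matrices each equal to A, B, or C, every entry of their product is at most Nat.fib (2n+1), and hence (as a real number) at most ((7 + 3·√5)/2)^n. -/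
open Matrix

/-!
Each of `A`, `B`, `C` is a product of two unit transvections (matrices `1 + Eᵢⱼ` with `i ≠ j`), so a
product of `n` of them is a word of length `2n` in unit transvections. Left multiplication by a unit
transvection adds one row to another. Hence, within a column, if single entries are at most `F` and
sums of two entries are at most `G`, then afterwards single entries are at most `G` and sums of two
entries at most `F + G`: this is the Fibonacci recursion.
The real bound is then `fib (2n + 1) ≤ φ ^ (2n) ≤ φ ^ (4n)` with `φ ^ 4 = (7 + 3√5) / 2`.
-/

section Transvection

open scoped Pointwise

variable {n m R : Type*}

section IsFibBounded

variable [Semiring R] [PartialOrder R]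

/-- The growth invariant for words of length `r` in unit transvections: in each column, every entry
is at most `fib (r + 1)` and every sum of two entries in distinct rows is at most `fib (r + 2)`.
The second bound is what makes the invariant inductive. -/
structure IsFibBounded (r : ℕ) (M : Matrix n m R) : Prop where
  entry_le : ∀ i k, M i k ≤ Nat.fib (r + 1)
  add_entry_le : ∀ i j k, i ≠ j → M i k + M j k ≤ Nat.fib (r + 2)

theorem isFibBounded_one [DecidableEq n] [IsOrderedRing R] :
    IsFibBounded 0 (1 : Matrix n n R) where
  entry_le i k := by
    rw [one_apply]
    split_ifs <;> simp
  add_entry_le i j k hij := by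
    rw [one_apply, one_apply]
    split_ifs with hik hjk
    · exact absurd (hik.trans hjk.symm) hij
    all_goals simp

end IsFibBounded

variable [DecidableEq n] [Fintype n] [CommRing R]

theorem IsFibBounded.transvection_mul [PartialOrder R] [IsOrderedRing R] {r : ℕ}
    {M : Matrix n m R} (hM : IsFibBounded r M) {i j : n} (hij : i ≠ j) :
    IsFibBounded (r + 1) (transvection i j (1 : R) * M) := by
  have apply_same (k : m) : (transvection i j (1 : R) * M) i k = M i k + M j k := by
    rw [transvection_mul_apply_same, one_mul]
  have fib_le_succ (s : ℕ) : (Nat.fib s : R) ≤ Nat.fib (s + 1) :=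
    Nat.mono_cast Nat.fib_le_fib_succ
  have add_changed_row (a : n) (k : m) (ha : a ≠ i) :
      (transvection i j (1 : R) * M) i k + (transvection i j (1 : R) * M) a k ≤
        Nat.fib (r + 3) := by
    rw [apply_same, transvection_mul_apply_of_ne _ _ _ _ ha]
    calc M i k + M j k + M a k
        = M j k + (M i k + M a k) := by abel
      _ ≤ Nat.fib (r + 1) + Nat.fib (r + 2) :=
        add_le_add (hM.entry_le j k) (hM.add_entry_le i a k ha.symm)
      _ = Nat.fib (r + 3) := by rw [Nat.fib_add_two (n := r + 1), Nat.cast_add]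
  constructor
  · intro a k
    obtain rfl | ha := eq_or_ne a i
    · exact (apply_same k).trans_le (hM.add_entry_le a j k hij)
    · rw [transvection_mul_apply_of_ne _ _ _ _ ha]
      exact (hM.entry_le a k).trans (fib_le_succ _)
  · intro a b k hab
    obtain rfl | ha := eq_or_ne a i
    · exact add_changed_row b k hab.symm
    obtain rfl | hb := eq_or_ne b i
    · rw [add_comm]
      exact add_changed_row a k hab
    · rw [transvection_mul_apply_of_ne _ _ _ _ ha, transvection_mul_apply_of_ne _ _ _ _ hb]
      exact (hM.add_entry_le a b k hab).trans (fib_le_succ _)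

variable (n R) in
/-- The elementary matrices `1 + Eᵢⱼ`, `i ≠ j`. Words of length `r` in them are the elements of the
pointwise power `unitTransvections n R ^ r`. For `n = Fin 2` they are the paper's `X` (`i = 0`,
`j = 1`) and `Y` (`i = 1`, `j = 0`). -/
def unitTransvections : Set (Matrix n n R) :=
  {M | ∃ i j, i ≠ j ∧ M = transvection i j 1}

theorem isFibBounded_of_mem_unitTransvections_pow [PartialOrder R] [IsOrderedRing R] {r : ℕ}
    {M : Matrix n n R} (hM : M ∈ unitTransvections n R ^ r) : IsFibBounded r M := by
  induction r generalizing M with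
  | zero =>
    rw [pow_zero, Set.mem_one] at hM
    exact hM ▸ isFibBounded_one
  | succ r ih =>
    rw [pow_succ'] at hM
    obtain ⟨_, ⟨i, j, hij, rfl⟩, N, hN, rfl⟩ := hM
    exact (ih hN).transvection_mul hij

theorem list_prod_mem_pow {G : Type*} [Monoid G] {S : Set G} {l : List G}
    (hl : ∀ g ∈ l, g ∈ S) : l.prod ∈ S ^ l.length := by
  induction l with
  | nil => simp
  | cons g l ih =>
    rw [List.prod_cons, List.length_cons, pow_succ']
    obtain ⟨hg, hl⟩ := List.forall_mem_cons.mp hl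
    exact Set.mul_mem_mul hg (ih hl)

theorem transvection_zero_one : transvection (0 : Fin 2) 1 (1 : R) = !![1, 1; 0, 1] := by
  ext i j
  fin_cases i <;> fin_cases j <;> simp [transvection]

theorem transvection_one_zero : transvection (1 : Fin 2) 0 (1 : R) = !![1, 0; 1, 1] := by
  ext i j
  fin_cases i <;> fin_cases j <;> simp [transvection]

theorem mem_unitTransvections_sq {M : Matrix (Fin 2) (Fin 2) ℤ} (hM : M = A ∨ M = B ∨ M = C) :
    M ∈ unitTransvections (Fin 2) ℤ ^ 2 := by
  have hX : !![1, 1; 0, 1] ∈ unitTransvections (Fin 2) ℤ :=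
    ⟨0, 1, zero_ne_one, transvection_zero_one.symm⟩
  have hY : !![1, 0; 1, 1] ∈ unitTransvections (Fin 2) ℤ :=
    ⟨1, 0, one_ne_zero, transvection_one_zero.symm⟩
  have hA : A = !![1, 1; 0, 1] * !![1, 1; 0, 1] := by simp [A]
  have hB : B = !![1, 0; 1, 1] * !![1, 0; 1, 1] := by simp [B]
  have hC : C = !![1, 1; 0, 1] * !![1, 0; 1, 1] := by simp [C]
  rw [sq]
  rcases hM with rfl | rfl | rfl
  · exact hA ▸ Set.mul_mem_mul hX hX
  · exact hB ▸ Set.mul_mem_mul hY hY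
  · exact hC ▸ Set.mul_mem_mul hX hY

theorem isFibBounded_list_prod {l : List (Matrix (Fin 2) (Fin 2) ℤ)}
    (hl : ∀ M ∈ l, M = A ∨ M = B ∨ M = C) : IsFibBounded (2 * l.length) l.prod := by
  apply isFibBounded_of_mem_unitTransvections_pow
  rw [pow_mul]
  exact list_prod_mem_pow fun M hM ↦ mem_unitTransvections_sq (hl M hM)

end Transvection

section GoldenRatio

open scoped goldenRatio

theorem fib_succ_le_goldenRatio_pow (n : ℕ) : (Nat.fib (n + 1) : ℝ) ≤ φ ^ n := by
  have hψ : ψ * Nat.fib n ≤ 0 :=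
    mul_nonpos_of_nonpos_of_nonneg Real.goldenConj_neg.le (Nat.cast_nonneg _)
  linarith [Real.fib_succ_sub_goldenConj_mul_fib n]

theorem goldenRatio_pow_four : φ ^ 4 = (7 + 3 * √5) / 2 := by
  calc φ ^ 4 = (φ + 1) ^ 2 := by rw [← Real.goldenRatio_sq, ← pow_mul]
    _ = φ ^ 2 + 2 * φ + 1 := by ring
    _ = 3 * φ + 2 := by rw [Real.goldenRatio_sq]; ring
    _ = (7 + 3 * √5) / 2 := by rw [Real.goldenRatio]; ring

theorem fib_two_mul_add_one_le_pow (n : ℕ) :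
    (Nat.fib (2 * n + 1) : ℝ) ≤ ((7 + 3 * √5) / 2) ^ n := by
  calc (Nat.fib (2 * n + 1) : ℝ)
      ≤ φ ^ (2 * n) := fib_succ_le_goldenRatio_pow (2 * n)
    _ ≤ φ ^ (4 * n) := pow_le_pow_right₀ Real.one_lt_goldenRatio.le (by lia)
    _ = ((7 + 3 * √5) / 2) ^ n := by rw [pow_mul, goldenRatio_pow_four]

end GoldenRatio

/-- Every entry of a product of `n` matrices from `{A, B, C}` is at most
`Nat.fib (2n+1)`, and hence at most `((7 + 3√5)/2)^n` as a real number. -/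
theorem entry_le_fib_and_real (l : List (Matrix (Fin 2) (Fin 2) ℤ))
    (h : ∀ M ∈ l, M = A ∨ M = B ∨ M = C) (i j : Fin 2) :
    l.prod i j ≤ (Nat.fib (2 * l.length + 1) : ℤ) ∧
      ((l.prod i j : ℤ) : ℝ) ≤ ((7 + 3 * Real.sqrt 5) / 2) ^ l.length := by
  have entry_le_fib : l.prod i j ≤ (Nat.fib (2 * l.length + 1) : ℤ) :=
    (isFibBounded_list_prod h).entry_le i j
  refine ⟨entry_le_fib, le_trans ?_ (fib_two_mul_add_one_le_pow l.length)⟩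
  exact_mod_cast entry_le_fib
end

section
/- Let p be a prime and let A = ![![1,2],![0,1]], B = ![![1,0],![2,1]], C = ![![2,1],![1,1]]. Suppose n is such that Nat.fib (2n+1) < p. Then for any two distinct lists l₁ ≠ l₂ over Fin 3, each of length at most n, the products of the corresponding matrices (0 ↦ A, 1 ↦ B, 2 ↦ C), reduced entrywise modulo p (i.e., mapped to matrices over ZMod p), are distinct. -/
open Matrix

/-!
Over `ℤ`, the first letter of a word can be read off its product `M`, by comparing the two rows of
`M`: a leading `A` makes row `0` at least twice row `1`, a leading `B` makes row `1` at least twice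
row `0`, and a leading `C` puts row `0` between row `1` and its double. Two of these conditions can
only hold together if the rows are proportional, which `det M = 1` excludes. So a ping-pong argument
shows that distinct words have distinct integer products. For words of length at most `n` the
entries of the products lie in `[0, fib (2n + 1)]`, so reduction modulo a larger number loses
nothing.
-/

section PingPong

variable {α M : Type*} [Monoid M]

theorem injective_list_prod_map_of_ping_pong {g : α → M} {P : Submonoid M} {S : α → Set M}
    (hgP : ∀ a, g a ∈ P) (hreg : ∀ a, IsLeftRegular (g a))
    (hmaps : ∀ a, ∀ w ∈ P, g a * w ∈ S a) (hone : ∀ a, 1 ∉ S a)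
    (hdisj : ∀ w ∈ P, ∀ a b, w ∈ S a → w ∈ S b → a = b) :
    Function.Injective fun l : List α ↦ (l.map g).prod := by
  have prod_mem (l : List α) : (l.map g).prod ∈ P :=
    P.list_prod_mem (List.forall_mem_map.2 fun a _ ↦ hgP a)
  have cons_mem (a : α) (l : List α) : ((a :: l).map g).prod ∈ S a := by
    rw [List.map_cons, List.prod_cons]
    exact hmaps a _ (prod_mem l)
  have cons_ne_one (a : α) (l : List α) : ((a :: l).map g).prod ≠ 1 :=
    fun h ↦ hone a (h ▸ cons_mem a l)
  intro l
  induction l with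
  | nil =>
    rintro (_ | ⟨b, m⟩) h
    · rfl
    · exact absurd h.symm (cons_ne_one b m)
  | cons a l ih =>
    rintro (_ | ⟨b, m⟩) h
    · exact absurd h (cons_ne_one a l)
    · dsimp only at h
      obtain rfl : a = b := hdisj _ (prod_mem (a :: l)) a b (cons_mem a l) (h ▸ cons_mem b m)
      rw [List.map_cons, List.map_cons, List.prod_cons, List.prod_cons] at h
      rw [ih (hreg a h)]

end PingPong

/-- The monoid `SL(n, R≥0)` of matrices of determinant one with nonnegative entries, as a submonoid
of all square matrices. -/
def nonnegDetOne (n R : Type*) [Fintype n] [DecidableEq n] [CommRing R] [PartialOrder R]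
    [IsOrderedRing R] : Submonoid (Matrix n n R) where
  carrier := {M | (∀ i j, 0 ≤ M i j) ∧ M.det = 1}
  one_mem' := by
    refine ⟨fun i j ↦ ?_, det_one⟩
    rw [one_apply]
    split_ifs <;> simp
  mul_mem' := by
    rintro M N ⟨hM, hMdet⟩ ⟨hN, hNdet⟩
    refine ⟨fun i j ↦ ?_, by rw [det_mul, hMdet, hNdet, one_mul]⟩
    exact Finset.sum_nonneg fun k _ ↦ mul_nonneg (hM i k) (hN k j)

section DetOne

variable {R : Type*} [CommRing R]

theorem isLeftRegular_of_det_eq_one {n : Type*} [Fintype n] [DecidableEq n] {M : Matrix n n R}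
    (hM : M.det = 1) : IsLeftRegular M :=
  ((isUnit_iff_isUnit_det M).2 (hM ▸ isUnit_one)).isRegular.left

theorem row_zero_ne_smul_row_one_of_det_eq_one [Nontrivial R] {M : Matrix (Fin 2) (Fin 2) R}
    (hM : M.det = 1) (c : R) : M 0 ≠ c • M 1 := by
  intro h
  have hdet : M.det = 0 := by
    rw [det_fin_two, h, Pi.smul_apply, Pi.smul_apply, smul_eq_mul, smul_eq_mul]
    ring
  exact one_ne_zero (hM.symm.trans hdet)

end DetOne

/-- The matrix of each letter, in the order used by the hash. -/
abbrev generator : Fin 3 → Matrix (Fin 2) (Fin 2) ℤ := ![A, B, C]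

theorem generator_mem_nonnegDetOne : ∀ x : Fin 3, generator x ∈ nonnegDetOne (Fin 2) ℤ
  | 0 => show A ∈ _ from ⟨by simp [A, Fin.forall_fin_two], by simp [A, det_fin_two]⟩
  | 1 => show B ∈ _ from ⟨by simp [B, Fin.forall_fin_two], by simp [B, det_fin_two]⟩
  | 2 => show C ∈ _ from ⟨by simp [C, Fin.forall_fin_two], by simp [C, det_fin_two]⟩

/-- The cone of vectors into which the matrix of a letter maps the first quadrant, up to the sign
conditions. It serves as the ping-pong domain of the letter, for each column of a matrix. -/
def leadingCone : Fin 3 → Set (Fin 2 → ℤ) :=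
  ![{v | 2 * v 1 ≤ v 0}, {v | 2 * v 0 ≤ v 1}, {v | v 1 ≤ v 0 ∧ v 0 ≤ 2 * v 1}]

theorem generator_mulVec_mem_leadingCone (x : Fin 3) {v : Fin 2 → ℤ} (hv : ∀ i, 0 ≤ v i) :
    generator x *ᵥ v ∈ leadingCone x := by
  have := hv 0
  have := hv 1
  match x with
  | 0 =>
    change A *ᵥ v ∈ _
    rw [A_mulVec]
    change 2 * v 1 ≤ v 0 + 2 * v 1
    omega
  | 1 =>
    change B *ᵥ v ∈ _
    rw [B_mulVec]
    change 2 * v 0 ≤ 2 * v 0 + v 1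
    omega
  | 2 =>
    change C *ᵥ v ∈ _
    rw [C_mulVec]
    change v 0 + v 1 ≤ 2 * v 0 + v 1 ∧ 2 * v 0 + v 1 ≤ 2 * (v 0 + v 1)
    omega

theorem exists_col_one_notMem_leadingCone :
    ∀ x : Fin 3, ∃ j, (1 : Matrix (Fin 2) (Fin 2) ℤ).col j ∉ leadingCone x
  | 0 => ⟨1, by simp [leadingCone]⟩
  | 1 => ⟨0, by simp [leadingCone]⟩
  | 2 => ⟨0, by simp [leadingCone]⟩

theorem eq_of_forall_col_mem_leadingCone {M : Matrix (Fin 2) (Fin 2) ℤ}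
    (hM : M ∈ nonnegDetOne (Fin 2) ℤ) (x y : Fin 3) (hx : ∀ j, M.col j ∈ leadingCone x)
    (hy : ∀ j, M.col j ∈ leadingCone y) : x = y := by
  obtain ⟨hnonneg, hdet⟩ := hM
  have not_proportional (c : ℤ) (h : ∀ j, M 0 j = c * M 1 j) : False :=
    row_zero_ne_smul_row_one_of_det_eq_one hdet c (funext h)
  have not_A_and_B (hA : ∀ j, 2 * M 1 j ≤ M 0 j) (hB : ∀ j, 2 * M 0 j ≤ M 1 j) : False :=
    not_proportional 0 fun j ↦ by linarith [hA j, hB j, hnonneg 0 j, hnonneg 1 j]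
  have not_A_and_C (hA : ∀ j, 2 * M 1 j ≤ M 0 j) (hC : ∀ j, M 1 j ≤ M 0 j ∧ M 0 j ≤ 2 * M 1 j) :
      False :=
    not_proportional 2 fun j ↦ le_antisymm (hC j).2 (hA j)
  have not_B_and_C (hB : ∀ j, 2 * M 0 j ≤ M 1 j) (hC : ∀ j, M 1 j ≤ M 0 j ∧ M 0 j ≤ 2 * M 1 j) :
      False :=
    not_proportional 0 fun j ↦ by linarith [hB j, (hC j).1, hnonneg 0 j]
  match x, y with
  | 0, 0 | 1, 1 | 2, 2 => rfl
  | 0, 1 => exact (not_A_and_B hx hy).elim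
  | 1, 0 => exact (not_A_and_B hy hx).elim
  | 0, 2 => exact (not_A_and_C hx hy).elim
  | 2, 0 => exact (not_A_and_C hy hx).elim
  | 1, 2 => exact (not_B_and_C hx hy).elim
  | 2, 1 => exact (not_B_and_C hy hx).elim

theorem injective_list_prod_map_generator :
    Function.Injective fun l : List (Fin 3) ↦ (l.map generator).prod :=
  injective_list_prod_map_of_ping_pong (S := fun x ↦ {M | ∀ j, M.col j ∈ leadingCone x})
    generator_mem_nonnegDetOne
    (fun x ↦ isLeftRegular_of_det_eq_one (generator_mem_nonnegDetOne x).2)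
    (fun x _ hM j ↦ generator_mulVec_mem_leadingCone x fun i ↦ hM.1 i j)
    (fun x ↦ not_forall.2 (exists_col_one_notMem_leadingCone x))
    fun _ hM ↦ eq_of_forall_col_mem_leadingCone hM

/-- Nonnegative vectors with entries at most `fib k` and entry sum at most `fib (k + 1)`. The bound
on the sum makes the family stable: every generator maps the box of index `k` into that of index
`k + 2`. -/
def fibBox (k : ℕ) : Set (Fin 2 → ℤ) :=
  {v | (∀ i, 0 ≤ v i ∧ v i ≤ Nat.fib k) ∧ v 0 + v 1 ≤ Nat.fib (k + 1)}

theorem mem_fibBox {k : ℕ} {v : Fin 2 → ℤ} : v ∈ fibBox k ↔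
    ((0 ≤ v 0 ∧ v 0 ≤ Nat.fib k) ∧ 0 ≤ v 1 ∧ v 1 ≤ Nat.fib k) ∧ v 0 + v 1 ≤ Nat.fib (k + 1) :=
  and_congr_left' Fin.forall_fin_two

theorem single_one_mem_fibBox_one (j : Fin 2) : Pi.single j 1 ∈ fibBox 1 := by
  fin_cases j <;> simp [mem_fibBox]

theorem generator_mulVec_mem_fibBox (x : Fin 3) {k : ℕ} {v : Fin 2 → ℤ} (hv : v ∈ fibBox k) :
    generator x *ᵥ v ∈ fibBox (k + 2) := by
  have fib_add_three : Nat.fib (k + 2 + 1) = Nat.fib (k + 1) + Nat.fib (k + 2) := Nat.fib_add_two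
  have fib_add_two : Nat.fib (k + 2) = Nat.fib k + Nat.fib (k + 1) := Nat.fib_add_two
  have fib_le : Nat.fib k ≤ Nat.fib (k + 1) := Nat.fib_le_fib_succ
  rw [mem_fibBox] at hv
  match x with
  | 0 =>
    change A *ᵥ v ∈ _
    rw [A_mulVec, mem_fibBox]
    simp only [cons_val_zero, cons_val_one]
    omega
  | 1 =>
    change B *ᵥ v ∈ _
    rw [B_mulVec, mem_fibBox]
    simp only [cons_val_zero, cons_val_one]
    omega
  | 2 =>
    change C *ᵥ v ∈ _
    rw [C_mulVec, mem_fibBox]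
    simp only [cons_val_zero, cons_val_one]
    omega

theorem list_prod_map_generator_mulVec_mem_fibBox (l : List (Fin 3)) {k : ℕ} {v : Fin 2 → ℤ}
    (hv : v ∈ fibBox k) : (l.map generator).prod *ᵥ v ∈ fibBox (k + 2 * l.length) := by
  induction l with
  | nil => simpa using hv
  | cons x l ih =>
    rw [List.map_cons, List.prod_cons, ← mulVec_mulVec]
    exact generator_mulVec_mem_fibBox x ih

theorem list_prod_map_generator_apply_mem_Icc {n : ℕ} {l : List (Fin 3)} (hl : l.length ≤ n)
    (i j : Fin 2) : (l.map generator).prod i j ∈ Set.Icc 0 (Nat.fib (2 * n + 1) : ℤ) := by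
  have hcol := list_prod_map_generator_mulVec_mem_fibBox l (single_one_mem_fibBox_one j)
  rw [mulVec_single_one] at hcol
  have hmono : Nat.fib (1 + 2 * l.length) ≤ Nat.fib (2 * n + 1) := Nat.fib_mono (by omega)
  exact ⟨(hcol.1 i).1, (hcol.1 i).2.trans (mod_cast hmono)⟩

theorem eq_of_map_intCast_eq_of_mem_Ico {m n : Type*} {N : ℕ} {X Y : Matrix m n ℤ}
    (hX : ∀ i j, X i j ∈ Set.Ico 0 (N : ℤ)) (hY : ∀ i j, Y i j ∈ Set.Ico 0 (N : ℤ))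
    (h : X.map (Int.cast : ℤ → ZMod N) = Y.map (Int.cast : ℤ → ZMod N)) : X = Y := by
  ext i j
  have hmod : X i j ≡ Y i j [ZMOD N] := (ZMod.intCast_eq_intCast_iff _ _ N).1 (ext_iff.2 h i j)
  rwa [Int.ModEq, Int.emod_eq_of_lt (hX i j).1 (hX i j).2,
    Int.emod_eq_of_lt (hY i j).1 (hY i j).2] at hmod

theorem no_short_collisions_general (N n : ℕ) (hfib : Nat.fib (2 * n + 1) < N)
    (l₁ l₂ : List (Fin 3)) (h₁ : l₁.length ≤ n) (h₂ : l₂.length ≤ n) (hne : l₁ ≠ l₂) :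
    ((l₁.map (![A, B, C])).prod).map (Int.cast : ℤ → ZMod N) ≠
      ((l₂.map (![A, B, C])).prod).map (Int.cast : ℤ → ZMod N) := by
  have entry_mem {l : List (Fin 3)} (hl : l.length ≤ n) (i j : Fin 2) :
      (l.map generator).prod i j ∈ Set.Ico 0 (N : ℤ) :=
    Set.Icc_subset_Ico_right (mod_cast hfib) (list_prod_map_generator_apply_mem_Icc hl i j)
  exact fun h ↦ hne <| injective_list_prod_map_generator <|
    eq_of_map_intCast_eq_of_mem_Ico (entry_mem h₁) (entry_mem h₂) h

/-- No short collisions modulo `p`: if `Nat.fib (2n+1) < p` then distinct words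
of length at most `n` in `A`, `B`, `C` hash to distinct matrices over `ZMod p`. -/
theorem no_short_collisions (p : ℕ) (hp : p.Prime) (n : ℕ)
    (hfib : Nat.fib (2 * n + 1) < p)
    (l₁ l₂ : List (Fin 3)) (h₁ : l₁.length ≤ n) (h₂ : l₂.length ≤ n)
    (hne : l₁ ≠ l₂) :
    ((l₁.map (![A, B, C])).prod).map (Int.cast : ℤ → ZMod p) ≠
      ((l₂.map (![A, B, C])).prod).map (Int.cast : ℤ → ZMod p) :=
  no_short_collisions_general p n hfib l₁ l₂ h₁ h₂ hne
end

section
/- Let encode : List Bool → List (Fin 3) be the cookie encoding. Then for all bit strings u, v : List Bool, encode (u ++ [false, false, false] ++ v) = encode (u ++ [false, false, false]) ++ encode v. Consequently, for the cookie hash H over any ring, H(u ++ 000 ++ v) = H(u ++ 000) · H(v). -/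
open Matrix

/-- Auxiliary state machine for the cookie encoding.  The first argument is the
mode (`false` = normal, `true` = cookie), the second counts the current run of
identical bits relevant to a mode switch (consecutive 1s in normal mode,
consecutive 0s in cookie mode). -/
def encodeAux : Bool → ℕ → List Bool → List (Fin 3)
  | _, _, [] => []
  | false, r, b :: rest =>
      if b then
        (1 : Fin 3) ::
          (if r + 1 ≥ 3 then encodeAux true 0 rest else encodeAux false (r + 1) rest)
      else
        (0 : Fin 3) :: encodeAux false 0 rest
  | true, r, b :: rest =>
      if b then
        (2 : Fin 3) :: encodeAux true 0 rest
      else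
        (0 : Fin 3) ::
          (if r + 1 ≥ 3 then encodeAux false 0 rest else encodeAux true (r + 1) rest)

/-- The cookie encoding: in normal mode, 0 ↦ 0 and 1 ↦ 1, switching to cookie
mode after three consecutive 1 bits; in cookie mode, 0 ↦ 0 and 1 ↦ 2, switching
back to normal mode after three consecutive 0 bits. -/
def encode : List Bool → List (Fin 3) :=
  encodeAux false 0

/-- The cookie hash: the ordered product of the matrices `A`, `B`, `C`
corresponding to the symbols 0, 1, 2 of the cookie encoding. -/
def H (u : List Bool) : Matrix (Fin 2) (Fin 2) ℤ :=
  ((encode u).map (![A, B, C])).prod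

/-- The cookie hash with entries in an arbitrary ring `R`. -/
def Hgen (R : Type*) [Ring R] (u : List Bool) : Matrix (Fin 2) (Fin 2) R :=
  ((encode u).map (fun s => ((![A, B, C]) s).map (Int.cast : ℤ → R))).prod

/-- Transition function of the cookie automaton on states `(mode, run length)`, with the conventions
of `encodeAux`. -/
def cookieStep : Bool × ℕ → Bool → Bool × ℕ
  | (false, r), true => if r + 1 ≥ 3 then (true, 0) else (false, r + 1)
  | (false, _), false => (false, 0)
  | (true, _), true => (true, 0)
  | (true, r), false => if r + 1 ≥ 3 then (false, 0) else (true, r + 1)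

/-- Output function of the cookie automaton: the symbol written for a bit, which depends on the
state only through its mode, the first argument. -/
def cookieSymbol : Bool → Bool → Fin 3
  | _, false => 0
  | false, true => 1
  | true, true => 2

theorem encodeAux_cons (m : Bool) (r : ℕ) (b : Bool) (u : List Bool) :
    encodeAux m r (b :: u) =
      cookieSymbol m b :: encodeAux (cookieStep (m, r) b).1 (cookieStep (m, r) b).2 u := by
  cases m <;> cases b <;> grind [encodeAux, cookieStep, cookieSymbol]

theorem encodeAux_append (m : Bool) (r : ℕ) (u v : List Bool) :
    encodeAux m r (u ++ v) =
      encodeAux m r u ++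
        encodeAux (u.foldl cookieStep (m, r)).1 (u.foldl cookieStep (m, r)).2 v := by
  induction u generalizing m r with
  | nil => simp [encodeAux]
  | cons b u ih => simp only [List.cons_append, encodeAux_cons, ih, List.foldl_cons]

theorem encode_append_of_foldl_cookieStep_eq {u : List Bool}
    (hu : u.foldl cookieStep (false, 0) = (false, 0)) (v : List Bool) :
    encode (u ++ v) = encode u ++ encode v := by
  simp only [encode, encodeAux_append, hu]

theorem Hgen_append_of_encode_append (R : Type*) [Ring R] {u v : List Bool}
    (huv : encode (u ++ v) = encode u ++ encode v) :
    Hgen R (u ++ v) = Hgen R u * Hgen R v := by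
  simp only [Hgen, huv, List.map_append, List.prod_append]

theorem foldl_cookieStep_three_false (s : Bool × ℕ) :
    [false, false, false].foldl cookieStep s = (false, 0) := by
  match s with
  | (false, _) | (true, 0) | (true, 1) => rfl
  | (true, r + 2) =>
    have leaves_cookie : cookieStep (true, r + 2) false = (false, 0) := by simp [cookieStep]
    rw [List.foldl_cons, leaves_cookie]
    rfl

/-- Padding property: appending three 0 bits resets the encoding state, so the
encoding (and hence the cookie hash, over any ring) is multiplicative across a
`000` padding block. -/
theorem encode_append_padding :
    (∀ u v : List Bool,
      encode (u ++ [false, false, false] ++ v) =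
        encode (u ++ [false, false, false]) ++ encode v) ∧
    (∀ (R : Type*) [Ring R] (u v : List Bool),
      Hgen R (u ++ [false, false, false] ++ v) =
        Hgen R (u ++ [false, false, false]) * Hgen R v) := by
  have reset (u : List Bool) :
      (u ++ [false, false, false]).foldl cookieStep (false, 0) = (false, 0) := by
    rw [List.foldl_append, foldl_cookieStep_three_false]
  have encode_append (u v : List Bool) := encode_append_of_foldl_cookieStep_eq (reset u) v
  exact ⟨encode_append, fun R _ u v => Hgen_append_of_encode_append R (encode_append u v)⟩
end

section
/- If a bit string u : List Bool contains no three consecutive 1 bits (i.e., [true, true, true] is not a contiguous infix of u), then its cookie encoding uses only the symbols 0 and 1: encode u = u.map (fun b => if b then (1 : Fin 3) else 0). Consequently, the cookie hash of u equals the ordinary two-generator Cayley hash of u, i.e., the ordered product of A for each 0 bit and B for each 1 bit. -/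
open Matrix

theorem lt_of_not_replicate_infix_replicate_append {α : Type*} {a : α} {k r : ℕ} {l : List α}
    (h : ¬ List.replicate k a <:+: List.replicate r a ++ l) : r < k := by
  by_contra! hkr
  have hprefix : List.replicate k a <+: List.replicate r a :=
    List.prefix_replicate_iff.mpr ⟨by simpa using hkr, by simp⟩
  exact h (hprefix.trans (List.prefix_append _ _)).isInfix

theorem encodeAux_false_cons_false (r : ℕ) (u : List Bool) :
    encodeAux false r (false :: u) = 0 :: encodeAux false 0 u :=
  rfl

theorem encodeAux_false_cons_true_of_lt {r : ℕ} (hr : r + 1 < 3) (u : List Bool) :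
    encodeAux false r (true :: u) = 1 :: encodeAux false (r + 1) u := by
  simp [encodeAux, hr.not_ge]

-- Prepending `r` ones to `u` records the run read so far, so that the hypothesis is preserved by
-- each step of the state machine.
theorem encodeAux_false_eq_map_of_not_infix {r : ℕ} {u : List Bool}
    (h : ¬ List.replicate 3 true <:+: List.replicate r true ++ u) :
    encodeAux false r u = u.map (fun b => if b then (1 : Fin 3) else 0) := by
  induction u generalizing r with
  | nil => simp [encodeAux]
  | cons b u ih =>
    cases b with
    | false =>
      have hsuffix : u <:+ List.replicate r true ++ false :: u :=
        (List.suffix_cons false u).trans (List.suffix_append _ _)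
      have hu : ¬ List.replicate 3 true <:+: List.replicate 0 true ++ u :=
        fun hu => h (hu.trans hsuffix.isInfix)
      simp [encodeAux_false_cons_false, ih hu]
    | true =>
      rw [List.append_cons, ← List.replicate_succ'] at h
      have hr : r + 1 < 3 := lt_of_not_replicate_infix_replicate_append h
      simp [encodeAux_false_cons_true_of_lt hr, ih h]

theorem vec3_comp_ite_one_zero {α : Type*} (x y z : α) :
    ![x, y, z] ∘ (fun b : Bool => if b then (1 : Fin 3) else 0) = fun b => if b then y else x := by
  funext b
  cases b <;> rfl

/-- If a bit string contains no three consecutive 1 bits, then its cookie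
encoding uses only the symbols 0 and 1, and its cookie hash coincides with the
ordinary two-generator Cayley hash (0 ↦ A, 1 ↦ B). -/
theorem encode_no_triple_ones (u : List Bool)
    (h : ¬ [true, true, true] <:+: u) :
    encode u = u.map (fun b => if b then (1 : Fin 3) else 0) ∧
    H u = (u.map (fun b => if b then B else A)).prod := by
  have hencode : encode u = u.map (fun b => if b then (1 : Fin 3) else 0) :=
    encodeAux_false_eq_map_of_not_infix (r := 0) h
  refine ⟨hencode, ?_⟩
  rw [H, hencode, List.map_map, vec3_comp_ite_one_zero]
end

section
/- Let M = ![![5,2],![2,1]]. For every natural number n and all indices i, j ∈ Fin 2, the entry (M^n) i j is at most (M^n) 0 0; i.e., the (0,0) entry is the largest entry of M^n. -/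
open Matrix

def M : Matrix (Fin 2) (Fin 2) ℤ := !![5, 2; 2, 1]

/-!
If row `i₀` of `A` dominates every other row entrywise and `B` is entrywise nonnegative, then
row `i₀` of `A * B` dominates every other row; dually for columns. Writing `A ^ (n + 1)` both as
`A * A ^ n` and as `A ^ n * A` shows that both properties pass from a nonnegative `A` to its
positive powers, and together they make the `(i₀, i₀)` entry the largest one. The identity matrix
has neither property in general, so the zeroth power is treated apart.
-/

theorem matrix_one_apply_le_one {m R : Type*} [DecidableEq m] [Zero R] [One R] [Preorder R]
    [ZeroLEOneClass R] (i j : m) : (1 : Matrix m m R) i j ≤ 1 := by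
  rw [one_apply]
  split_ifs
  · exact le_rfl
  · exact zero_le_one

section OrderedSemiring

variable {l m o R : Type*} [Fintype m] [Semiring R] [PartialOrder R] [IsOrderedRing R]

theorem matrix_mul_apply_le_mul_apply_of_row_le {A : Matrix l m R} {B : Matrix m o R} {i i₀ : l}
    {j : o} (hA : ∀ k, A i k ≤ A i₀ k) (hB : ∀ k, 0 ≤ B k j) :
    (A * B) i j ≤ (A * B) i₀ j :=
  dotProduct_le_dotProduct_of_nonneg_right hA hB

theorem matrix_mul_apply_le_mul_apply_of_col_le {A : Matrix l m R} {B : Matrix m o R} {i : l}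
    {j j₀ : o} (hA : ∀ k, 0 ≤ A i k) (hB : ∀ k, B k j ≤ B k j₀) :
    (A * B) i j ≤ (A * B) i j₀ :=
  dotProduct_le_dotProduct_of_nonneg_left hB hA

theorem M_pow_entry_max_general [DecidableEq m] {A : Matrix m m R} {i₀ : m}
    (hA : ∀ i j, 0 ≤ A i j) (hrow : ∀ i j, A i j ≤ A i₀ j) (hcol : ∀ i j, A i j ≤ A i i₀)
    (n : ℕ) (i j : m) : (A ^ n) i j ≤ (A ^ n) i₀ i₀ := by
  cases n with
  | zero => simpa only [pow_zero, one_apply_eq] using matrix_one_apply_le_one i j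
  | succ n =>
    have hpow : ∀ i j, 0 ≤ (A ^ n) i j := pow_apply_nonneg hA n
    calc
      (A ^ (n + 1)) i j ≤ (A ^ (n + 1)) i₀ j := by
        rw [pow_succ']
        exact matrix_mul_apply_le_mul_apply_of_row_le (hrow i) (hpow · j)
      _ ≤ (A ^ (n + 1)) i₀ i₀ := by
        rw [pow_succ]
        exact matrix_mul_apply_le_mul_apply_of_col_le (hpow i₀) (hcol · j)

end OrderedSemiring

theorem M_apply_nonneg (i j : Fin 2) : 0 ≤ M i j := by
  fin_cases i <;> fin_cases j <;> simp [M]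

theorem M_apply_le_row_zero (i j : Fin 2) : M i j ≤ M 0 j := by
  fin_cases i <;> fin_cases j <;> simp [M]

theorem M_apply_le_col_zero (i j : Fin 2) : M i j ≤ M i 0 := by
  fin_cases i <;> fin_cases j <;> simp [M]

/-- The `(0,0)` entry is the largest entry of every power of `M = !![5,2;2,1]`. -/
theorem M_pow_entry_max (n : ℕ) (i j : Fin 2) :
    (M ^ n) i j ≤ (M ^ n) 0 0 :=
  M_pow_entry_max_general M_apply_nonneg M_apply_le_row_zero M_apply_le_col_zero n i j
end

section
/- Let k ≥ 1 be an integer, A(k) = ![![1,k],![0,1]] and B(k) = ![![1,0],![k,1]]. For every list of 2j matrices each equal to A(k) or B(k), every entry of their product is at most the (0,0) entry of (A(k)·B(k))^j. In other words, among all products of 2j matrices from {A(k), B(k)}, the maximal entry is achieved by the alternating product (A(k)B(k))^j. -/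
open Matrix

def Ak (k : ℤ) : Matrix (Fin 2) (Fin 2) ℤ := !![1, k; 0, 1]
def Bk (k : ℤ) : Matrix (Fin 2) (Fin 2) ℤ := !![1, 0; k, 1]

/-!
Multiplying on the left by `A(k)` or `B(k)` adds `k` times one row to the other, so each column of a
product evolves by `(x, y) ↦ (x + k y, y)` or `(x, y) ↦ (x, y + k x)`. Let `f 0 = 0`, `f 1 = 1` and
`f (n + 2) = k f (n + 1) + f n`. After `n` steps both entries of a column are at most `f (n + 1)`,
and one of them is at most `f n`: the entry left unchanged by a step keeps the smaller bound, and
the rearrangement inequality bounds the other one. Alternating the two matrices attains these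
bounds.
-/

/-- The Fibonacci polynomials evaluated at `k`: the solution of `f (n + 2) = k f (n + 1) + f n` with
`f 0 = 0` and `f 1 = 1`. -/
def fibEval {R : Type*} [Semiring R] (k : R) : ℕ → R
  | 0 => 0
  | 1 => 1
  | n + 2 => k * fibEval k (n + 1) + fibEval k n

/-- The matrix `A(k)` over an arbitrary semiring; it acts on column vectors by adding `k` times the
second entry to the first. -/
def upperShear {R : Type*} [Semiring R] (k : R) : Matrix (Fin 2) (Fin 2) R := !![1, k; 0, 1]

/-- The matrix `B(k)` over an arbitrary semiring; it acts on column vectors by adding `k` times the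
first entry to the second. -/
def lowerShear {R : Type*} [Semiring R] (k : R) : Matrix (Fin 2) (Fin 2) R := !![1, 0; k, 1]

section Semiring

variable {R : Type*} [Semiring R] (k : R)

theorem fibEval_add_two (n : ℕ) :
    fibEval k (n + 2) = k * fibEval k (n + 1) + fibEval k n :=
  rfl

theorem upperShear_mulVec_eq (v : Fin 2 → R) :
    upperShear k *ᵥ v = ![v 0 + k * v 1, v 1] := by
  simp [upperShear, Matrix.mulVec_eq_sum, funext_iff, Fin.forall_fin_two]

theorem lowerShear_mulVec_eq (v : Fin 2 → R) :
    lowerShear k *ᵥ v = ![v 0, v 1 + k * v 0] := by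
  simp [lowerShear, Matrix.mulVec_eq_sum, funext_iff, Fin.forall_fin_two, add_comm]

theorem upperShear_mul_lowerShear_pow_col_zero (j : ℕ) :
    ((upperShear k * lowerShear k) ^ j).col 0 = ![fibEval k (2 * j + 1), fibEval k (2 * j)] := by
  induction j with
  | zero => simp [fibEval, funext_iff, Fin.forall_fin_two]
  | succ j ih =>
    have col_succ : ((upperShear k * lowerShear k) ^ (j + 1)).col 0 =
        upperShear k *ᵥ lowerShear k *ᵥ ((upperShear k * lowerShear k) ^ j).col 0 := by
      rw [pow_succ', mul_assoc]
      rfl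
    rw [col_succ, ih, lowerShear_mulVec_eq, upperShear_mulVec_eq, mul_add_one,
      fibEval_add_two k (2 * j + 1), fibEval_add_two]
    simp [add_comm]

end Semiring

/-- The invariant of the columns of a product: both entries of `v` are at most `b`, and at least one
of them is at most `a`. -/
structure FitsUnder {R : Type*} [LE R] (v : Fin 2 → R) (a b : R) : Prop where
  forall_le : ∀ i, v i ≤ b
  exists_le : ∃ i, v i ≤ a

section OrderedSemiring

variable {R : Type*} [Semiring R] [PartialOrder R] [IsOrderedRing R] {k a b : R}

theorem fibEval_nonneg (hk : 0 ≤ k) (n : ℕ) : 0 ≤ fibEval k n := by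
  induction n using Nat.twoStepInduction with
  | zero => exact le_rfl
  | one => exact zero_le_one
  | more n ih ih_succ => exact add_nonneg (mul_nonneg hk ih_succ) ih

theorem le_mul_add_of_one_le (hk : 1 ≤ k) (ha : 0 ≤ a) (hb : 0 ≤ b) : b ≤ k * b + a :=
  le_add_of_le_of_nonneg (le_mul_of_one_le_left hb hk) ha

theorem fibEval_le_succ (hk : 1 ≤ k) (n : ℕ) : fibEval k n ≤ fibEval k (n + 1) := by
  have nonneg := fibEval_nonneg (zero_le_one.trans hk)
  cases n with
  | zero => exact zero_le_one
  | succ n => exact le_mul_add_of_one_le hk (nonneg n) (nonneg (n + 1))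

theorem fitsUnder_one_col (i : Fin 2) : FitsUnder ((1 : Matrix (Fin 2) (Fin 2) R).col i) 0 1 := by
  constructor
  · intro m
    rw [Matrix.col_apply, Matrix.one_apply]
    split_ifs
    exacts [le_rfl, zero_le_one]
  · obtain ⟨m, hm⟩ := exists_ne i
    exact ⟨m, (Matrix.one_apply_ne hm).le⟩

variable [ExistsAddOfLE R] [AddLeftReflectLE R] {v : Fin 2 → R}

theorem FitsUnder.add_mul_le (hv : FitsUnder v a b) (hk : 1 ≤ k) (hab : a ≤ b) {i j : Fin 2}
    (hij : i ≠ j) : v i + k * v j ≤ k * b + a := by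
  have hk₀ : 0 ≤ k := zero_le_one.trans hk
  obtain ⟨m, hm⟩ := hv.exists_le
  obtain rfl | rfl : m = i ∨ m = j := by lia
  · rw [add_comm]
    exact add_le_add (mul_le_mul_of_nonneg_left (hv.forall_le j) hk₀) hm
  · calc
      v i + k * v m ≤ 1 * b + k * a := by
        rw [one_mul]
        exact add_le_add (hv.forall_le i) (mul_le_mul_of_nonneg_left hm hk₀)
      _ ≤ 1 * a + k * b := mul_add_mul_le_mul_add_mul hk hab
      _ = k * b + a := by rw [one_mul, add_comm]

theorem FitsUnder.upperShear_mulVec (hv : FitsUnder v a b) (hk : 1 ≤ k) (ha : 0 ≤ a)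
    (hab : a ≤ b) : FitsUnder (upperShear k *ᵥ v) b (k * b + a) := by
  rw [upperShear_mulVec_eq]
  have unchanged_le := (hv.forall_le 1).trans (le_mul_add_of_one_le hk ha (ha.trans hab))
  exact ⟨Fin.forall_fin_two.2 ⟨hv.add_mul_le hk hab zero_ne_one, unchanged_le⟩,
    1, hv.forall_le 1⟩

theorem FitsUnder.lowerShear_mulVec (hv : FitsUnder v a b) (hk : 1 ≤ k) (ha : 0 ≤ a)
    (hab : a ≤ b) : FitsUnder (lowerShear k *ᵥ v) b (k * b + a) := by
  rw [lowerShear_mulVec_eq]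
  have unchanged_le := (hv.forall_le 0).trans (le_mul_add_of_one_le hk ha (ha.trans hab))
  exact ⟨Fin.forall_fin_two.2 ⟨unchanged_le, hv.add_mul_le hk hab one_ne_zero⟩,
    0, hv.forall_le 0⟩

theorem fitsUnder_prod_col (hk : 1 ≤ k) {l : List (Matrix (Fin 2) (Fin 2) R)}
    (h : ∀ M ∈ l, M = upperShear k ∨ M = lowerShear k) (i : Fin 2) :
    FitsUnder (l.prod.col i) (fibEval k l.length) (fibEval k (l.length + 1)) := by
  induction l with
  | nil => exact fitsUnder_one_col i
  | cons M l ih =>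
    rw [List.forall_mem_cons] at h
    have fits_tail := ih h.2
    have nonneg := fibEval_nonneg (zero_le_one.trans hk) l.length
    have le_succ := fibEval_le_succ hk l.length
    have col_cons : (M :: l).prod.col i = M *ᵥ l.prod.col i := by
      rw [List.prod_cons]
      rfl
    rw [col_cons]
    obtain rfl | rfl := h.1
    · exact fits_tail.upperShear_mulVec hk nonneg le_succ
    · exact fits_tail.lowerShear_mulVec hk nonneg le_succ

theorem alternating_product_maximal_general (hk : 1 ≤ k) (j : ℕ)
    (l : List (Matrix (Fin 2) (Fin 2) R)) (hlen : l.length = 2 * j)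
    (h : ∀ M ∈ l, M = upperShear k ∨ M = lowerShear k) (i i' : Fin 2) :
    l.prod i i' ≤ ((upperShear k * lowerShear k) ^ j) 0 0 :=
  calc
    l.prod i i' ≤ fibEval k (l.length + 1) := (fitsUnder_prod_col hk h i').forall_le i
    _ = fibEval k (2 * j + 1) := by rw [hlen]
    _ = ((upperShear k * lowerShear k) ^ j) 0 0 :=
      (congrFun (upperShear_mul_lowerShear_pow_col_zero k j) 0).symm

end OrderedSemiring

/-- Bromberg–Shpilrain–Vdovina: among all products of `2j` matrices from
`{A(k), B(k)}` with `k ≥ 1`, the maximal entry is achieved by the alternating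
product `(A(k)·B(k))^j`, namely by its `(0,0)` entry. -/
theorem alternating_product_maximal (k : ℤ) (hk : 1 ≤ k) (j : ℕ)
    (l : List (Matrix (Fin 2) (Fin 2) ℤ)) (hlen : l.length = 2 * j)
    (h : ∀ M ∈ l, M = Ak k ∨ M = Bk k) (i i' : Fin 2) :
    l.prod i i' ≤ ((Ak k * Bk k) ^ j) 0 0 :=
  alternating_product_maximal_general hk j l hlen h i i'
end
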